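/- (Recursion, Theorem 1.) Let ψ be a procedure environment and φ a contract environment. Assume: (i) for every procedure environment ψ', if ψ' ⊨ φ then for every procedure name y, the Hoare triple ψ' ⊨ {pre_φ(y)} ψ(y) {post_φ(y)} holds (i.e., the body of y taken from ψ satisfies its contract when executed under ψ'); and (ii) if ψ ⊨ φ then ψ ⊨ {P} c {Q}. Then ψ ⊨ {P} c {Q}. -/

import Mathlib

/-- Memory states: location `x_i` holds value `σ i`. -/
abbrev Mem : Type := ℕ → ℕ

/-- Update `σ[i/n]`: maps `i` to `n` and agrees with `σ` elsewhere. -/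
def Mem.update (σ : Mem) (i n : ℕ) : Mem := fun j => if j = i then n else σ j

inductive Aop : Type
  | add | mul | sub

def Aop.eval : Aop → ℕ → ℕ → ℕ
  | .add => fun m n => m + n
  | .mul => fun m n => m * n
  | .sub => fun m n => m - n

/-- Arithmetic expressions. -/
inductive Aexp : Type
  | const : ℕ → Aexp
  | loc : ℕ → Aexp
  | deref : ℕ → Aexp
  | addr : ℕ → Aexp
  | binop : Aop → Aexp → Aexp → Aexp

def Aexp.eval : Aexp → Mem → ℕ
  | .const n, _ => n
  | .loc i, σ => σ i
  | .deref i, σ => σ (σ i)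
  | .addr i, _ => i
  | .binop o a1 a2, σ => o.eval (a1.eval σ) (a2.eval σ)

inductive Bcmp : Type
  | le | lt | eq

def Bcmp.eval : Bcmp → ℕ → ℕ → Bool
  | .le => fun m n => decide (m ≤ n)
  | .lt => fun m n => decide (m < n)
  | .eq => fun m n => decide (m = n)

/-- Boolean expressions. -/
inductive Bexp : Type
  | tt : Bexp
  | ff : Bexp
  | cmp : Bcmp → Aexp → Aexp → Bexp
  | and : Bexp → Bexp → Bexp
  | or : Bexp → Bexp → Bexp
  | not : Bexp → Bexp

def Bexp.eval : Bexp → Mem → Bool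
  | .tt, _ => true
  | .ff, _ => false
  | .cmp o a1 a2, σ => o.eval (a1.eval σ) (a2.eval σ)
  | .and b1 b2, σ => b1.eval σ && b2.eval σ
  | .or b1 b2, σ => b1.eval σ || b2.eval σ
  | .not b, σ => !(b.eval σ)

/-- Commands, over a type `Y` of procedure names. -/
inductive Com (Y : Type) : Type
  | skip : Com Y
  | assign : ℕ → Aexp → Com Y                      -- x_i := a
  | store : ℕ → Aexp → Com Y                       -- *x_i := a
  | seq : Com Y → Com Y → Com Y
  | assert : (Mem → Prop) → Com Y
  | cond : Bexp → Com Y → Com Y → Com Y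
  | while : Bexp → (Mem → Prop) → Com Y → Com Y
  | call : Y → Com Y

/-- Big-step operational semantics `⟨c, σ⟩ →_ψ σ'`. -/
inductive BigStep {Y : Type} (ψ : Y → Com Y) : Com Y → Mem → Mem → Prop
  | skip (σ : Mem) : BigStep ψ .skip σ σ
  | assign (i : ℕ) (a : Aexp) (σ : Mem) :
      BigStep ψ (.assign i a) σ (σ.update i (a.eval σ))
  | store (i : ℕ) (a : Aexp) (σ : Mem) :
      BigStep ψ (.store i a) σ (σ.update (σ i) (a.eval σ))
  | seq {c1 c2 : Com Y} {σ σ'' σ' : Mem} :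
      BigStep ψ c1 σ σ'' → BigStep ψ c2 σ'' σ' → BigStep ψ (.seq c1 c2) σ σ'
  | assert (P : Mem → Prop) (σ : Mem) : BigStep ψ (.assert P) σ σ
  | condTrue {b : Bexp} {c1 c2 : Com Y} {σ σ' : Mem} :
      b.eval σ = true → BigStep ψ c1 σ σ' → BigStep ψ (.cond b c1 c2) σ σ'
  | condFalse {b : Bexp} {c1 c2 : Com Y} {σ σ' : Mem} :
      b.eval σ = false → BigStep ψ c2 σ σ' → BigStep ψ (.cond b c1 c2) σ σ'
  | whileTrue {b : Bexp} {I : Mem → Prop} {c : Com Y} {σ σ'' σ' : Mem} :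
      b.eval σ = true → BigStep ψ c σ σ'' → BigStep ψ (.while b I c) σ'' σ' →
      BigStep ψ (.while b I c) σ σ'
  | whileFalse {b : Bexp} {I : Mem → Prop} {c : Com Y} {σ : Mem} :
      b.eval σ = false → BigStep ψ (.while b I c) σ σ
  | call {y : Y} {σ σ' : Mem} : BigStep ψ (ψ y) σ σ' → BigStep ψ (.call y) σ σ'

/-- Hoare triple `ψ ⊨ {P} c {Q}`. -/
def HoareTriple {Y : Type} (ψ : Y → Com Y) (P : Mem → Prop) (c : Com Y)
    (Q : Mem → Mem → Prop) : Prop :=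
  ∀ σ σ' : Mem, P σ → BigStep ψ c σ σ' → Q σ σ'

/-- A contract: a precondition and a postcondition. -/
abbrev Contract : Type := (Mem → Prop) × (Mem → Mem → Prop)

/-- Contract validity `ψ ⊨ φ`. -/
def ContractValid {Y : Type} (ψ : Y → Com Y) (φ : Y → Contract) : Prop :=
  ∀ y : Y, HoareTriple ψ (φ y).1 (.call y) (φ y).2

/-- Pointwise big-step execution of a sequence of commands. -/
inductive BigSteps {Y : Type} (ψ : Y → Com Y) : List (Com Y) → List Mem → List Mem → Prop
  | nil : BigSteps ψ [] [] []
  | cons {c : Com Y} {cs : List (Com Y)} {σ σ' : Mem} {σs σs' : List Mem} :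
      BigStep ψ c σ σ' → BigSteps ψ cs σs σs' →
      BigSteps ψ (c :: cs) (σ :: σs) (σ' :: σs')

/-- Relational Hoare triple `ψ ⊨ {P} (c_k) {Q}`. -/
def RHoare {Y : Type} (ψ : Y → Com Y) (P : List Mem → Prop) (cs : List (Com Y))
    (Q : List Mem → List Mem → Prop) : Prop :=
  ∀ σs σs' : List Mem, P σs → BigSteps ψ cs σs σs' → Q σs σs'

/-- A relational contract: a relational precondition and postcondition. -/
abbrev RContract : Type := (List Mem → Prop) × (List Mem → List Mem → Prop)

/-- Relational contract validity `ψ ⊨ Φ`. -/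
def RContractValid {Y : Type} (ψ : Y → Com Y) (Φ : List Y → RContract) : Prop :=
  ∀ ys : List Y, ys ≠ [] → RHoare ψ (Φ ys).1 (ys.map Com.call) (Φ ys).2

/-- Optimized main VC function `Tc`. -/
def Tc {Y : Type} : Com Y → Mem → Mem → (Y → Contract) → (Prop → Prop) → Prop
  | .skip, σ, σ', _, f => f (σ = σ')
  | .assign i a, σ, σ', _, f => f (σ' = σ.update i (a.eval σ))
  | .store i a, σ, σ', _, f => f (σ' = σ.update (σ i) (a.eval σ))
  | .assert P', σ, σ', _, f => f (P' σ ∧ σ = σ')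
  | .seq c0 c1, σ, σ', φ, f =>
      ∀ σ'' : Mem, Tc c0 σ σ'' φ (fun p1 => Tc c1 σ'' σ' φ (fun p2 => f (p1 ∧ p2)))
  | .cond b c0 c1, σ, σ', φ, f =>
      Tc c0 σ σ' φ (fun p1 => Tc c1 σ σ' φ (fun p2 =>
        f ((b.eval σ = true → p1) ∧ (b.eval σ = false → p2))))
  | .call y, σ, σ', φ, f => f ((φ y).1 σ ∧ (φ y).2 σ σ')
  | .while b I _, σ, σ', _, f => f (I σ ∧ I σ' ∧ b.eval σ' = false)

/-- Optimized auxiliary VC function `Ta`. -/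
def Ta {Y : Type} : Com Y → Mem → (Y → Contract) → Prop
  | .skip, _, _ => True
  | .assign _ _, _, _ => True
  | .store _ _, _, _ => True
  | .assert P', σ, _ => P' σ
  | .seq c0 c1, σ, φ =>
      Ta c0 σ φ ∧ ∀ σ' : Mem, Tc c0 σ σ' φ (fun p => p → Ta c1 σ' φ)
  | .cond b c0 c1, σ, φ =>
      (b.eval σ = true → Ta c0 σ φ) ∧ (b.eval σ = false → Ta c1 σ φ)
  | .call y, σ, φ => (φ y).1 σ
  | .while b I c, σ, φ =>
      I σ ∧ (∀ σ' : Mem, I σ' → b.eval σ' = true → Ta c σ' φ) ∧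
      (∀ σ' σ'' : Mem, I σ' → Tc c σ' σ'' φ (fun p => p → I σ''))

/-- Optimized procedure VC `Tf`. -/
def Tf {Y : Type} (φ : Y → Contract) (ψ : Y → Com Y) : Prop :=
  ∀ (y : Y) (σ σ' : Mem), (φ y).1 σ →
    Ta (ψ y) σ φ ∧ Tc (ψ y) σ σ' φ (fun p => p → (φ y).2 σ σ')

/-- Naive main VC function `Tcⁿ`. -/
def Tcn {Y : Type} : Com Y → Mem → (Y → Contract) → (Mem → Prop) → Prop
  | .skip, σ, _, P => P σ
  | .assign i a, σ, _, P => P (σ.update i (a.eval σ))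
  | .store i a, σ, _, P => P (σ.update (σ i) (a.eval σ))
  | .assert P', σ, _, P => P' σ → P σ
  | .seq c0 c1, σ, φ, P => Tcn c0 σ φ (fun σ'' => Tcn c1 σ'' φ P)
  | .cond b c0 c1, σ, φ, P =>
      (b.eval σ = true → Tcn c0 σ φ P) ∧ (b.eval σ = false → Tcn c1 σ φ P)
  | .call y, σ, φ, P => ∀ σ' : Mem, (φ y).1 σ ∧ (φ y).2 σ σ' → P σ'
  | .while b I _, σ, _, P => ∀ σ' : Mem, I σ ∧ I σ' ∧ b.eval σ' = false → P σ'

/-- Naive auxiliary VC function `Taⁿ`. -/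
def Tan {Y : Type} : Com Y → Mem → (Y → Contract) → Prop
  | .skip, _, _ => True
  | .assign _ _, _, _ => True
  | .store _ _, _, _ => True
  | .assert P', σ, _ => P' σ
  | .seq c0 c1, σ, φ => Tan c0 σ φ ∧ Tcn c0 σ φ (fun σ' => Tan c1 σ' φ)
  | .cond b c0 c1, σ, φ =>
      (b.eval σ = true → Tan c0 σ φ) ∧ (b.eval σ = false → Tan c1 σ φ)
  | .call y, σ, φ => (φ y).1 σ
  | .while b I c, σ, φ =>
      I σ ∧ (∀ σ' : Mem, I σ' → b.eval σ' = true → Tan c σ' φ ∧ Tcn c σ' φ I)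

/-- Naive procedure VC `Tfⁿ`. -/
def Tfn {Y : Type} (φ : Y → Contract) (ψ : Y → Com Y) : Prop :=
  ∀ (y : Y) (σ : Mem), (φ y).1 σ →
    Tan (ψ y) σ φ ∧ Tcn (ψ y) σ φ (fun σ' => (φ y).2 σ σ')

/-- Relational VC function `Tr` (recursion over the sequence of commands). -/
def Tr {Y : Type} : List (Com Y) → List Mem → List Mem → (Y → Contract) →
    (Prop → Prop) → Prop
  | [], [], [], _, f => f True
  | c :: cs, σ :: σs, σ' :: σs', φ, f =>
      Tc c σ σ' φ (fun pn => Tr cs σs σs' φ (fun pm => f (pn ∧ pm)))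
  | _, _, _, _, _ => True

/-- Relational auxiliary VC function `Ta_r`. -/
def Tar {Y : Type} : List (Com Y) → List Mem → (Y → Contract) → Prop
  | [], [], _ => True
  | c :: cs, σ :: σs, φ => Ta c σ φ ∧ Tar cs σs φ
  | _, _, _ => True

/-- `Proccall(y, σ, σ', ψ)`. -/
def Proccall {Y : Type} (y : Y) (σ σ' : Mem) (ψ : Y → Com Y) : Prop :=
  BigStep ψ (.call y) σ σ'

/-- `Procpred`: all the calls of the sequence have taken place. -/
def Procpred {Y : Type} (ψ : Y → Com Y) : List Y → List Mem → List Mem → Prop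
  | [], [], [] => True
  | y :: ys, σ :: σs, σ' :: σs' => Proccall y σ σ' ψ ∧ Procpred ψ ys σs σs'
  | _, _, _ => False

/-- `Tpr`: translation of the relational contracts into a logical formula. -/
def Tpr {Y : Type} (Φ : List Y → RContract) (ψ : Y → Com Y) : Prop :=
  ∀ (ys : List Y) (σs σs' : List Mem), ys ≠ [] →
    Procpred ψ ys σs σs' → (Φ ys).1 σs → (Φ ys).2 σs σs'

/-- `Φcall`: reduce singleton relational contracts to standard contracts with
tracked calls. -/
def Phicall {Y : Type} (Φ : List Y → RContract) (ψ : Y → Com Y) : Y → Contract :=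
  fun y =>
    (fun σ => (Φ [y]).1 [σ],
     fun σ σ' => (Φ [y]).2 [σ] [σ'] ∧ Proccall y σ σ' ψ)

/-- Relational procedure VC `Tf_r`. -/
def Tfr {Y : Type} (Φ : List Y → RContract) (ψ : Y → Com Y) : Prop :=
  ∀ (ys : List Y) (σs σs' : List Mem) (ψ' : Y → Com Y),
    (Φ ys).1 σs → Tpr Φ ψ' →
    Tar (ys.map ψ) σs (Phicall Φ ψ') ∧
    Tr (ys.map ψ) σs σs' (Phicall Φ ψ')
      (fun p => p → (Φ ys).2 σs σs')

/-- The recursive summation command `c_sum`. -/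
def csum : Com Unit :=
  .cond (.cmp .lt (.loc 1) (.loc 2))
    (.seq (.assign 3 (.binop .add (.loc 3) (.loc 1)))
      (.seq (.assign 1 (.binop .add (.loc 1) (.const 1)))
        (.call ())))
    .skip

/-- The procedure environment binding `y_sum` to `c_sum`. -/
def psum : Unit → Com Unit := fun _ => csum

/-!
Hypothesis `h1` cannot be applied to `ψ` itself, since `ContractValid ψ φ` is what has to be shown.
It is applied instead to the environments `ψₙ` in which calls are inlined `n` times and diverge at
greater depth. A call under `ψₙ₊₁` behaves as the body taken from `ψ` does under `ψₙ`, so every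
`ψₙ` satisfies the contracts by induction on `n`; and an execution under `ψ`, being a finite
derivation, is already an execution under `ψₙ` for large `n`.
-/

section Semantics

variable {Y : Type} {ψ : Y → Com Y} {σ σ' : Mem}

theorem bigStep_seq_iff {c₁ c₂ : Com Y} :
    BigStep ψ (.seq c₁ c₂) σ σ' ↔ ∃ τ, BigStep ψ c₁ σ τ ∧ BigStep ψ c₂ τ σ' :=
  ⟨fun | .seq h₁ h₂ => ⟨_, h₁, h₂⟩, fun ⟨_, h₁, h₂⟩ => .seq h₁ h₂⟩

theorem bigStep_cond_iff {b : Bexp} {c₁ c₂ : Com Y} :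
    BigStep ψ (.cond b c₁ c₂) σ σ' ↔
      b.eval σ = true ∧ BigStep ψ c₁ σ σ' ∨ b.eval σ = false ∧ BigStep ψ c₂ σ σ' :=
  ⟨fun | .condTrue hb h => .inl ⟨hb, h⟩ | .condFalse hb h => .inr ⟨hb, h⟩,
   fun | .inl ⟨hb, h⟩ => .condTrue hb h | .inr ⟨hb, h⟩ => .condFalse hb h⟩

theorem bigStep_call_iff {y : Y} : BigStep ψ (.call y) σ σ' ↔ BigStep ψ (ψ y) σ σ' :=
  ⟨fun | .call h => h, .call⟩

theorem bigStep_while_iff {b : Bexp} {I : Mem → Prop} {c : Com Y} :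
    BigStep ψ (.while b I c) σ σ' ↔
      Relation.ReflTransGen (fun τ τ' => b.eval τ = true ∧ BigStep ψ c τ τ') σ σ' ∧
        b.eval σ' = false := by
  constructor
  · intro h
    generalize hw : Com.while b I c = w at h
    induction h with
    | whileTrue hb hbody _ _ ih =>
      cases hw
      exact ⟨.head ⟨hb, hbody⟩ (ih rfl).1, (ih rfl).2⟩
    | whileFalse hb => cases hw; exact ⟨.refl, hb⟩
    | _ => cases hw
  · rintro ⟨hiter, hb⟩
    induction hiter using Relation.ReflTransGen.head_induction_on with
    | refl => exact .whileFalse hb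
    | head hstep _ ih => exact .whileTrue hstep.1 hstep.2 ih

end Semantics

section Inlining

variable {Y Z : Type}

/-- Inlining, i.e. substitution of commands for calls: every call to `y` is replaced by `θ y`. -/
def Com.inline (θ : Y → Com Z) : Com Y → Com Z
  | .skip => .skip
  | .assign i a => .assign i a
  | .store i a => .store i a
  | .seq c₁ c₂ => .seq (c₁.inline θ) (c₂.inline θ)
  | .assert P => .assert P
  | .cond b c₁ c₂ => .cond b (c₁.inline θ) (c₂.inline θ)
  | .while b I c => .while b I (c.inline θ)
  | .call y => θ y

theorem bigStep_inline_iff {ψ : Y → Com Y} {χ : Z → Com Z} {θ : Y → Com Z}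
    (hθ : ∀ y σ σ', BigStep χ (θ y) σ σ' ↔ BigStep ψ (.call y) σ σ') (c : Com Y) (σ σ' : Mem) :
    BigStep χ (c.inline θ) σ σ' ↔ BigStep ψ c σ σ' := by
  induction c generalizing σ σ' with
  | skip | assign | store | assert => constructor <;> rintro ⟨⟩ <;> constructor
  | seq c₁ c₂ ih₁ ih₂ => simp only [Com.inline, bigStep_seq_iff, ih₁, ih₂]
  | cond b c₁ c₂ ih₁ ih₂ => simp only [Com.inline, bigStep_cond_iff, ih₁, ih₂]
  | call y => exact hθ y σ σ'
  | _ b I c ih => simp only [Com.inline, bigStep_while_iff, ih]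

end Inlining

section Approximation

variable {Y : Type}

/-- A command that never terminates, standing for a call that is cut off; its loop invariant has no
effect on execution. -/
def Com.diverge : Com Y := .while .tt (fun _ => True) .skip

theorem not_bigStep_diverge (χ : Y → Com Y) (σ σ' : Mem) : ¬ BigStep χ .diverge σ σ' :=
  fun h => Bool.noConfusion (bigStep_while_iff.mp h).2

/-- The `n`-th approximation of the environment `ψ`: call-free procedure bodies obtained by inlining
`ψ` to depth `n`, where deeper calls diverge. -/
def approxEnv (ψ : Y → Com Y) : ℕ → Y → Com Y
  | 0 => fun _ => .diverge
  | n + 1 => fun y => (ψ y).inline (approxEnv ψ n)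

variable {ψ : Y → Com Y}

theorem bigStep_approxEnv_congr (χ χ' : Y → Com Y) (n : ℕ) (y : Y) (σ σ' : Mem) :
    BigStep χ (approxEnv ψ n y) σ σ' ↔ BigStep χ' (approxEnv ψ n y) σ σ' := by
  induction n generalizing χ χ' y σ σ' with
  | zero => exact iff_of_false (not_bigStep_diverge χ σ σ') (not_bigStep_diverge χ' σ σ')
  | succ n ih =>
    have inline_iff (ξ : Y → Com Y) :
        BigStep ξ (approxEnv ψ (n + 1) y) σ σ' ↔ BigStep (approxEnv ψ n) (ψ y) σ σ' :=
      bigStep_inline_iff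
        (fun z τ τ' => (ih ξ (approxEnv ψ n) z τ τ').trans bigStep_call_iff.symm) (ψ y) σ σ'
    exact (inline_iff χ).trans (inline_iff χ').symm

theorem bigStep_approxEnv_succ_call_iff {n : ℕ} {y : Y} {σ σ' : Mem} :
    BigStep (approxEnv ψ (n + 1)) (.call y) σ σ' ↔ BigStep (approxEnv ψ n) (ψ y) σ σ' :=
  bigStep_call_iff.trans <| bigStep_inline_iff
    (fun z τ τ' => (bigStep_approxEnv_congr _ _ n z τ τ').trans bigStep_call_iff.symm) (ψ y) σ σ'

theorem BigStep.eventually_approxEnv {c : Com Y} {σ σ' : Mem} (h : BigStep ψ c σ σ') :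
    ∀ᶠ n in Filter.atTop, BigStep (approxEnv ψ n) c σ σ' := by
  induction h with
  | skip => exact .of_forall fun _ => .skip _
  | assign => exact .of_forall fun _ => .assign _ _ _
  | store => exact .of_forall fun _ => .store _ _ _
  | assert => exact .of_forall fun _ => .assert _ _
  | seq _ _ ih₁ ih₂ => filter_upwards [ih₁, ih₂] with n h₁ h₂ using .seq h₁ h₂
  | condTrue hb _ ih => exact ih.mono fun _ => .condTrue hb
  | condFalse hb _ ih => exact ih.mono fun _ => .condFalse hb
  | whileTrue hb _ _ ih₁ ih₂ => filter_upwards [ih₁, ih₂] with n h₁ h₂ using .whileTrue hb h₁ h₂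
  | whileFalse hb => exact .of_forall fun _ => .whileFalse hb
  | call _ ih =>
    rw [← Filter.map_add_atTop_eq_nat 1, Filter.eventually_map]
    exact ih.mono fun _ => bigStep_approxEnv_succ_call_iff.mpr

end Approximation

section Contracts

variable {Y : Type} {ψ : Y → Com Y} {φ : Y → Contract}

theorem HoareTriple.of_forall_approxEnv {P : Mem → Prop} {c : Com Y} {Q : Mem → Mem → Prop}
    (h : ∀ n, HoareTriple (approxEnv ψ n) P c Q) : HoareTriple ψ P c Q := fun σ σ' hP hc =>
  let ⟨n, hn⟩ := hc.eventually_approxEnv.exists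
  h n σ σ' hP hn

theorem contractValid_approxEnv_zero (ψ : Y → Com Y) (φ : Y → Contract) :
    ContractValid (approxEnv ψ 0) φ := fun _ σ σ' _ h =>
  (not_bigStep_diverge _ σ σ' (bigStep_call_iff.mp h)).elim

theorem contractValid_approxEnv_succ_iff {n : ℕ} :
    ContractValid (approxEnv ψ (n + 1)) φ ↔
      ∀ y, HoareTriple (approxEnv ψ n) (φ y).1 (ψ y) (φ y).2 := by
  simp only [ContractValid, HoareTriple, bigStep_approxEnv_succ_call_iff]

theorem contractValid_of_bodies
    (hbody : ∀ ψ' : Y → Com Y, ContractValid ψ' φ →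
      ∀ y, HoareTriple ψ' (φ y).1 (ψ y) (φ y).2) :
    ContractValid ψ φ := by
  have approx_valid (n : ℕ) : ContractValid (approxEnv ψ n) φ := by
    induction n with
    | zero => exact contractValid_approxEnv_zero ψ φ
    | succ n ih => exact contractValid_approxEnv_succ_iff.mpr (hbody _ ih)
  exact fun y => .of_forall_approxEnv fun n => approx_valid n y

end Contracts

/-- Theorem 1 (Recursion). -/
theorem recursion_hoare_triple {Y : Type} (ψ : Y → Com Y) (φ : Y → Contract)
    (P : Mem → Prop) (c : Com Y) (Q : Mem → Mem → Prop)
    (h1 : ∀ ψ' : Y → Com Y, ContractValid ψ' φ →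
      ∀ y : Y, HoareTriple ψ' (φ y).1 (ψ y) (φ y).2)
    (h2 : ContractValid ψ φ → HoareTriple ψ P c Q) :
    HoareTriple ψ P c Q :=
  h2 (contractValid_of_bodies h1)
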